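/- arXiv:math/9403216 — 2 statements merged into one kernel-verified Lean document; each statement's English description precedes it below -/
import Mathlib

section
/- (Heine's transformation) Let 0<q<1, a,c∈ℂ, b,z∈ℂ with |b|<1 and |z|<1, and suppose c and az do not lie in {1,q^{-1},q^{-2},…}. Then ₂φ₁(a,b;c;q,z) = ((az;q)_∞ (b;q)_∞ / ((z;q)_∞ (c;q)_∞)) · ₂φ₁(c/b, z; az; q, b). -/
/-!
Heine's argument. The `q`-binomial theorem
`∑ (a;q)_n / (q;q)_n z^n = (az;q)_∞ / (z;q)_∞` for `|z| < 1` (`qpi_mul_qbin`) follows from the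
functional equation `(1 - z) f(z) = (1 - a z) f(qz)` of its left-hand side `f`, iterated and
passed to the limit, as `f(z q^n) → f(0) = 1`.

Since `(b;q)_n / (c;q)_n = (b;q)_∞ / (c;q)_∞ · (c q^n;q)_∞ / (b q^n;q)_∞`, the `q`-binomial theorem
with parameter `c / b` at `b q^n` expands the left-hand side of Heine's transformation into a double
series with general term `(a;q)_n / (q;q)_n · (c/b;q)_m / (q;q)_m · z^n b^m q^{nm}`. The coefficients
`(a;q)_n / (q;q)_n` are bounded, so this is dominated by a product of geometric series; interchanging
the sums and summing over `n` first by the `q`-binomial theorem gives the right-hand side.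
-/

noncomputable section

/-- The finite q-shifted factorial `(a;q)_k`. -/
def qp (q a : ℂ) (k : ℕ) : ℂ := ∏ j ∈ Finset.range k, (1 - a * q ^ j)

/-- The infinite q-shifted factorial `(a;q)_∞`. -/
def qpi (q a : ℂ) : ℂ := ∏' j : ℕ, (1 - a * q ^ j)

/-- The basic hypergeometric series `₂φ₁(a,b;c;q,z)`. -/
def phi21 (q a b c z : ℂ) : ℂ :=
  ∑' k : ℕ, qp q a k * qp q b k / (qp q c k * qp q q k) * z ^ k

open Filter Topology

lemma summable_qfac {q : ℂ} (hq : ‖q‖ < 1) (a : ℂ) : Summable fun j : ℕ => ‖-(a * q ^ j)‖ := by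
  simpa using (summable_geometric_of_lt_one (norm_nonneg q) hq).mul_left ‖a‖

lemma tendsto_qp {q : ℂ} (hq : ‖q‖ < 1) (a : ℂ) :
    Tendsto (qp q a) atTop (𝓝 (qpi q a)) := by
  have h : Multipliable fun j : ℕ => 1 - a * q ^ j := by
    simpa [sub_eq_add_neg] using multipliable_one_add_of_summable (summable_qfac hq a)
  exact h.tendsto_prod_tprod_nat

lemma qpi_ne_zero {q : ℂ} (hq : ‖q‖ < 1) {a : ℂ} (ha : ∀ n : ℕ, a * q ^ n ≠ 1) :
    qpi q a ≠ 0 := by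
  have := tprod_one_add_ne_zero_of_summable (f := fun j : ℕ => -(a * q ^ j))
    (fun i => by rw [← sub_eq_add_neg]; exact sub_ne_zero.2 (ha i).symm) (summable_qfac hq a)
  simpa [qpi, sub_eq_add_neg] using this

lemma qp_ne_zero {q a : ℂ} (ha : ∀ n : ℕ, a * q ^ n ≠ 1) (k : ℕ) : qp q a k ≠ 0 :=
  Finset.prod_ne_zero_iff.2 fun i _ => sub_ne_zero.2 (ha i).symm

lemma mul_pow_ne_one {q a : ℂ} (hq : ‖q‖ < 1) (ha : ‖a‖ < 1) (n : ℕ) : a * q ^ n ≠ 1 := by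
  intro h
  have h1 : ‖a‖ * ‖q‖ ^ n = 1 := by rw [← norm_pow, ← norm_mul, h, norm_one]
  have h2 : ‖q‖ ^ n ≤ 1 := pow_le_one₀ (norm_nonneg _) hq.le
  nlinarith [norm_nonneg a]

lemma qp_succ (q a : ℂ) (k : ℕ) : qp q a (k + 1) = qp q a k * (1 - a * q ^ k) :=
  Finset.prod_range_succ _ _

lemma qpi_eq_qp_mul {q : ℂ} (hq : ‖q‖ < 1) (a : ℂ) (n : ℕ) :
    qpi q a = qp q a n * qpi q (a * q ^ n) := by
  have h1 : Tendsto (fun m => qp q a (n + m)) atTop (𝓝 (qpi q a)) := by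
    have := (tendsto_add_atTop_iff_nat n).2 (tendsto_qp hq a)
    simpa only [add_comm n] using this
  have h2 := (tendsto_qp hq (a * q ^ n)).const_mul (qp q a n)
  refine tendsto_nhds_unique h1 (h2.congr fun m => ?_)
  simp only [qp, Finset.prod_range_add, pow_add, mul_assoc]

/-- The coefficient `(a;q)_n / (q;q)_n` of the `q`-binomial series. -/
def qcoef (q a : ℂ) (n : ℕ) : ℂ := qp q a n / qp q q n

lemma qcoef_bounded {q : ℂ} (hq : ‖q‖ < 1) (a : ℂ) :
    ∃ C : ℝ, ∀ n, ‖qcoef q a n‖ ≤ C := by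
  have h := ((tendsto_qp hq a).div (tendsto_qp hq q)
    (qpi_ne_zero hq (mul_pow_ne_one hq hq))).norm.bddAbove_range
  obtain ⟨C, hC⟩ := h
  exact ⟨C, fun n => hC ⟨n, rfl⟩⟩

lemma qcoef_succ {q : ℂ} (hq : ‖q‖ < 1) (a : ℂ) (n : ℕ) :
    qcoef q a (n + 1) * (1 - q ^ (n + 1)) = qcoef q a n * (1 - a * q ^ n) := by
  have h1 := qp_ne_zero (mul_pow_ne_one hq hq) n
  have h2 : 1 - q * q ^ n ≠ 0 := sub_ne_zero.2 (mul_pow_ne_one hq hq n).symm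
  rw [qcoef, qcoef, qp_succ, qp_succ, pow_succ', div_mul_eq_mul_div, mul_div_mul_right _ _ h2,
    mul_div_right_comm]

lemma summable_norm_qbin {q : ℂ} (hq : ‖q‖ < 1) (a : ℂ) {z : ℂ} (hz : ‖z‖ < 1) :
    Summable fun n => ‖qcoef q a n * z ^ n‖ := by
  obtain ⟨C, hC⟩ := qcoef_bounded hq a
  refine Summable.of_nonneg_of_le (fun _ => norm_nonneg _) (fun n => ?_)
    ((summable_geometric_of_lt_one (norm_nonneg z) hz).mul_left C)
  rw [norm_mul, norm_pow]
  gcongr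
  exact hC n

/-- The `q`-binomial series `₁φ₀(a;-;q,z)`. -/
def qbin (q a z : ℂ) : ℂ := ∑' n, qcoef q a n * z ^ n

lemma norm_mul_pow_lt_one {q z : ℂ} (hq : ‖q‖ < 1) (hz : ‖z‖ < 1) (n : ℕ) : ‖z * q ^ n‖ < 1 := by
  rw [norm_mul, norm_pow]
  have h2 : ‖q‖ ^ n ≤ 1 := pow_le_one₀ (norm_nonneg _) hq.le
  nlinarith [norm_nonneg z]

/-- The functional equation, from comparing coefficients in `f(z) - f(qz) = z f(z) - a z f(qz)`. -/
lemma qbin_step {q : ℂ} (hq : ‖q‖ < 1) (a : ℂ) {z : ℂ} (hz : ‖z‖ < 1) :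
    (1 - z) * qbin q a z = (1 - a * z) * qbin q a (z * q) := by
  have hzq : ‖z * q‖ < 1 := by simpa using norm_mul_pow_lt_one hq hz 1
  have s1 := (summable_norm_qbin hq a hz).of_norm
  have s2 := (summable_norm_qbin hq a hzq).of_norm
  have e1 : qbin q a z - qbin q a (z * q) =
      ∑' n, (qcoef q a n * z ^ n - qcoef q a n * (z * q) ^ n) := (s1.tsum_sub s2).symm
  have e2 : z * qbin q a z - a * z * qbin q a (z * q) =
      ∑' n, (z * (qcoef q a n * z ^ n) - a * z * (qcoef q a n * (z * q) ^ n)) := by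
    rw [(s1.mul_left z).tsum_sub (s2.mul_left (a * z)), tsum_mul_left, tsum_mul_left]; rfl
  have e3 : qbin q a z - qbin q a (z * q) = z * qbin q a z - a * z * qbin q a (z * q) := by
    rw [e1, e2, (s1.sub s2).tsum_eq_zero_add]
    simp only [pow_zero, mul_one, sub_self, zero_add]
    refine tsum_congr fun n => ?_
    have := qcoef_succ hq a n
    rw [mul_pow, mul_pow]
    linear_combination z ^ (n + 1) * this
  linear_combination e3

lemma qbin_iterate {q : ℂ} (hq : ‖q‖ < 1) (a : ℂ) {z : ℂ} (hz : ‖z‖ < 1) (n : ℕ) :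
    qp q z n * qbin q a z = qp q (a * z) n * qbin q a (z * q ^ n) := by
  induction n with
  | zero => simp [qp]
  | succ n ih =>
    have h := qbin_step hq a (norm_mul_pow_lt_one hq hz n)
    rw [qp_succ, qp_succ, pow_succ, ← mul_assoc z]
    linear_combination (1 - z * q ^ n) * ih + qp q (a * z) n * h

lemma tendsto_qbin {q : ℂ} (hq : ‖q‖ < 1) (a : ℂ) {z : ℂ} (hz : ‖z‖ < 1) :
    Tendsto (fun n : ℕ => qbin q a (z * q ^ n)) atTop (𝓝 1) := by
  have h0 : ∑' k, qcoef q a k * (0 : ℂ) ^ k = 1 := by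
    rw [tsum_eq_single 0 (fun k hk => by simp [hk])]
    simp [qcoef, qp]
  rw [← h0]
  have hl : Tendsto (fun n : ℕ => z * q ^ n) atTop (𝓝 0) := by
    simpa using (tendsto_pow_atTop_nhds_zero_of_norm_lt_one hq).const_mul z
  refine tendsto_tsum_of_dominated_convergence (summable_norm_qbin hq a hz)
    (fun k => (hl.pow k).const_mul _) (Eventually.of_forall fun n k => ?_)
  rw [norm_mul, norm_mul, norm_pow, norm_pow, norm_mul, norm_pow]
  gcongr
  exact mul_le_of_le_one_right (norm_nonneg _) (pow_le_one₀ (norm_nonneg _) hq.le)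

/-- The `q`-binomial theorem, cleared of denominators. -/
lemma qpi_mul_qbin {q : ℂ} (hq : ‖q‖ < 1) (a : ℂ) {z : ℂ} (hz : ‖z‖ < 1) :
    qpi q z * qbin q a z = qpi q (a * z) := by
  have h1 := (tendsto_qp hq z).mul_const (qbin q a z)
  have h2 := (tendsto_qp hq (a * z)).mul (tendsto_qbin hq a hz)
  rw [mul_one] at h2
  exact tendsto_nhds_unique h1 (h2.congr fun n => (qbin_iterate hq a hz n).symm)

/-- The ratio `(x;q)_n / (y;q)_n` as a multiple of a `q`-binomial series at `x q^n`. -/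
lemma qp_div_qp {q : ℂ} (hq : ‖q‖ < 1) {x y t : ℂ} (hx : ‖x‖ < 1) (hy : ∀ n : ℕ, y * q ^ n ≠ 1)
    (ht : t * x = y) (n : ℕ) :
    qp q x n / qp q y n = qpi q x / qpi q y * qbin q t (x * q ^ n) := by
  have h1 := qpi_mul_qbin hq t (norm_mul_pow_lt_one hq hx n)
  rw [← mul_assoc, ht] at h1
  have h2 := qp_ne_zero hy n
  have h3 := qpi_ne_zero hq hy
  have h4 := qpi_eq_qp_mul hq x n
  have h5 := qpi_eq_qp_mul hq y n
  rw [div_mul_eq_mul_div, div_eq_div_iff h2 h3, h4, h5, ← h1]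
  ring

lemma heine_summable {q : ℂ} (hq : ‖q‖ < 1) (a t : ℂ) {b z : ℂ} (hb : ‖b‖ < 1) (hz : ‖z‖ < 1) :
    Summable fun p : ℕ × ℕ =>
      qcoef q a p.1 * z ^ p.1 * (qcoef q t p.2 * b ^ p.2) * q ^ (p.1 * p.2) := by
  have h := (summable_norm_qbin hq a hz).mul_of_nonneg (summable_norm_qbin hq t hb)
    (fun _ => norm_nonneg _) (fun _ => norm_nonneg _)
  refine Summable.of_norm_bounded h fun p => ?_
  rw [norm_mul, norm_mul, norm_pow q]
  exact mul_le_of_le_one_right (by positivity) (pow_le_one₀ (norm_nonneg _) hq.le)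

/-- Heine's transformation for a complex base `q` of modulus less than one. -/
lemma heine_complex {q : ℂ} (hq : ‖q‖ < 1) (a b c z : ℂ)
    (hb : ‖b‖ < 1) (hb0 : b ≠ 0) (hz : ‖z‖ < 1)
    (hc : ∀ n : ℕ, c * q ^ n ≠ 1) (haz : ∀ n : ℕ, a * z * q ^ n ≠ 1) :
    phi21 q a b c z =
      (qpi q (a * z) * qpi q b) / (qpi q z * qpi q c) * phi21 q (c / b) z (a * z) b := by
  obtain ⟨t, ht⟩ : ∃ t, t = c / b := ⟨_, rfl⟩
  rw [← ht]
  have htb : t * b = c := by rw [ht, div_mul_cancel₀ c hb0]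
  have hz0 := qpi_ne_zero hq (mul_pow_ne_one hq hz)
  have hc0 := qpi_ne_zero hq hc
  have haz0 := qpi_ne_zero hq haz
  have key : ∑' n, ∑' m, qcoef q a n * z ^ n * (qcoef q t m * b ^ m) * q ^ (n * m) =
      ∑' m, ∑' n, qcoef q a n * z ^ n * (qcoef q t m * b ^ m) * q ^ (n * m) :=
    (Summable.tsum_comm (f := fun n m =>
      qcoef q a n * z ^ n * (qcoef q t m * b ^ m) * q ^ (n * m))
      (heine_summable hq a t hb hz)).symm
  have e1 : phi21 q a b c z = qpi q b / qpi q c * ∑' n, ∑' m,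
      qcoef q a n * z ^ n * (qcoef q t m * b ^ m) * q ^ (n * m) := by
    rw [phi21, ← tsum_mul_left]
    refine tsum_congr fun n => ?_
    have hr := qp_div_qp hq hb hc htb n
    have hs : ∑' m, qcoef q a n * z ^ n * (qcoef q t m * b ^ m) * q ^ (n * m) =
        qcoef q a n * z ^ n * qbin q t (b * q ^ n) := by
      rw [qbin, ← tsum_mul_left]
      refine tsum_congr fun m => ?_
      rw [mul_pow, ← pow_mul]; ring
    rw [hs, qcoef]
    calc _ = qp q a n / qp q q n * z ^ n * (qp q b n / qp q c n) := by
          rw [mul_div_mul_comm, div_mul_div_comm, mul_comm (qp q c n), ← div_mul_div_comm]; ring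
      _ = _ := by rw [hr]; ring
  have e2 : phi21 q t z (a * z) b = qpi q z / qpi q (a * z) * ∑' m, ∑' n,
      qcoef q a n * z ^ n * (qcoef q t m * b ^ m) * q ^ (n * m) := by
    rw [phi21, ← tsum_mul_left]
    refine tsum_congr fun m => ?_
    have hr := qp_div_qp hq hz haz rfl m
    have hs : ∑' n, qcoef q a n * z ^ n * (qcoef q t m * b ^ m) * q ^ (n * m) =
        qcoef q t m * b ^ m * qbin q a (z * q ^ m) := by
      rw [qbin, ← tsum_mul_left]
      refine tsum_congr fun n => ?_
      rw [mul_pow, ← pow_mul, mul_comm n m]; ring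
    rw [hs, qcoef]
    calc _ = qp q t m / qp q q m * b ^ m * (qp q z m / qp q (a * z) m) := by
          rw [mul_div_mul_comm, div_mul_div_comm, mul_comm (qp q (a * z) m), ← div_mul_div_comm]
          ring
      _ = _ := by rw [hr]; ring
  rw [e1, e2, key]
  field_simp

/-- Heine's transformation:
`₂φ₁(a,b;c;q,z) = ((az;q)_∞ (b;q)_∞ / ((z;q)_∞ (c;q)_∞)) ₂φ₁(c/b, z; az; q, b)`,
for `0<q<1`, `|b|<1`, `|z|<1` (with `b ≠ 0` so that `c/b` is meaningful) and
`c`, `az` not in `{1, q^{-1}, q^{-2}, …}`. -/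
theorem stmt3 (q : ℝ) (hq0 : 0 < q) (hq1 : q < 1) (a b c z : ℂ)
    (hb : ‖b‖ < 1) (hb0 : b ≠ 0) (hz : ‖z‖ < 1)
    (hc : ∀ n : ℕ, c * (q : ℂ) ^ n ≠ 1) (haz : ∀ n : ℕ, a * z * (q : ℂ) ^ n ≠ 1) :
    phi21 (q : ℂ) a b c z =
      (qpi (q : ℂ) (a * z) * qpi (q : ℂ) b) / (qpi (q : ℂ) z * qpi (q : ℂ) c) *
        phi21 (q : ℂ) (c / b) z (a * z) b := by
  have hq : ‖(q : ℂ)‖ < 1 := by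
    rwa [Complex.norm_real, Real.norm_of_nonneg hq0.le]
  exact heine_complex hq a b c z hb hb0 hz hc haz
end
end

section
/- Let 0<q<1 and c,z∈ℂ with z≠0, |z|>|c|, and c ∉ {q^{-n} : n∈ℤ_{≥0}}. Then Σ_{k=-∞}^∞ (-1)^k q^{k(k-1)/2} z^k/(c;q)_k = (q, z, q/z;q)_∞ / (c, c/z;q)_∞. -/
/-! The proof interchanges two sums. Write `T(n) = (-1)^n q^{n(n-1)/2} z^n`, so that the general term
of the series is `T(k) (cq^k;q)_∞ / (c;q)_∞`, and let `(q;q)_m` be the finite product.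
Euler's expansion `(x;q)_∞ = ∑_m (-1)^m q^{m(m-1)/2} x^m / (q;q)_m` at `x = cq^k`, combined with
`binom(k,2) + binom(m,2) + km = binom(k+m,2)`, gives
`T(k) (cq^k;q)_∞ = ∑_m T(k+m) (c/z)^m / (q;q)_m`.
After the substitution `n = k + m` the double sum factors as `(∑_n T(n)) (∑_m (c/z)^m / (q;q)_m)`,
and Euler's other expansion evaluates the second factor as `1 / (c/z;q)_∞` because `|c/z| < 1`
(`hasSum_theta_mul_qpi`).

The theta series `∑_n T(n)` is evaluated by the same identity at `c = q`: there the terms with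
`k < 0` vanish, and Euler's expansion sums the rest to `(q;q)_∞ (z;q)_∞`. This proves the Jacobi
triple product `∑_n T(n) = (q, z, q/z;q)_∞` when `|z| > |q|`; the symmetry `z ↦ q/z`, `n ↦ -n`
covers the remaining `z` (`tsum_theta`). -/

noncomputable section

/-- The q-shifted factorial `(a;q)_k := (a;q)_∞ / (aq^k;q)_∞` for `k ∈ ℤ`. -/
def qpz (q a : ℂ) (k : ℤ) : ℂ := qpi q a / qpi q (a * q ^ k)

/-- The term of the `₀ψ₁` series: `(-1)^k q^{k(k-1)/2} z^k / (c;q)_k`, `k ∈ ℤ`. -/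
def psi01Term (q c z : ℂ) (k : ℤ) : ℂ :=
  (-1 : ℂ) ^ k * q ^ (k * (k - 1) / 2) * z ^ k / qpz q c k

open Filter Topology

/-- The term `(-1)^k q^{k(k-1)/2} z^k` of the theta series. -/
def thetaTerm (q z : ℂ) (k : ℤ) : ℂ := (-1 : ℂ) ^ k * q ^ (k * (k - 1) / 2) * z ^ k

/-- The finite q-factorial `(q;q)_m = (1 - q) ⋯ (1 - q^m)`. -/
def qfac (q : ℂ) (m : ℕ) : ℂ := ∏ i ∈ Finset.range m, (1 - q ^ (i + 1))

/-! ### Elementary facts on the factors -/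

lemma one_sub_pow_ne_zero {q : ℂ} (hq : ‖q‖ < 1) (i : ℕ) : 1 - q ^ (i + 1) ≠ 0 := by
  intro h
  have h1 : ‖q ^ (i + 1)‖ < 1 := by
    rw [norm_pow]
    exact pow_lt_one₀ (norm_nonneg _) hq (Nat.succ_ne_zero i)
  rw [← sub_eq_zero.mp h] at h1
  simp at h1

lemma qfac_ne_zero {q : ℂ} (hq : ‖q‖ < 1) (m : ℕ) : qfac q m ≠ 0 :=
  Finset.prod_ne_zero_iff.mpr fun i _ => one_sub_pow_ne_zero hq i

lemma qfac_succ (q : ℂ) (m : ℕ) : qfac q (m + 1) = qfac q m * (1 - q ^ (m + 1)) :=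
  Finset.prod_range_succ _ _

lemma multipliable_qpi {q : ℂ} (hq : ‖q‖ < 1) (x : ℂ) :
    Multipliable fun j : ℕ => 1 - x * q ^ j := by
  have h : Summable fun j : ℕ => ‖-(x * q ^ j)‖ := by
    simp only [norm_neg, norm_mul, norm_pow]
    exact (summable_geometric_of_lt_one (norm_nonneg _) hq).mul_left _
  simpa [sub_eq_add_neg] using multipliable_one_add_of_summable h

lemma tendsto_qpi {q : ℂ} (hq : ‖q‖ < 1) (x : ℂ) :
    Tendsto (fun N => ∏ i ∈ Finset.range N, (1 - x * q ^ i)) atTop (𝓝 (qpi q x)) :=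
  (multipliable_qpi hq x).hasProd.tendsto_prod_nat

lemma qpi_eq_mul {q : ℂ} (hq : ‖q‖ < 1) (x : ℂ) : qpi q x = (1 - x) * qpi q (x * q) := by
  have h1 := (tendsto_qpi hq x).comp (tendsto_add_atTop_nat 1)
  refine tendsto_nhds_unique h1 (((tendsto_qpi hq (x * q)).const_mul (1 - x)).congr fun N => ?_)
  simp only [Function.comp, Finset.prod_range_succ']
  rw [mul_comm]
  simp [pow_succ', mul_assoc]

lemma qfac_mul_qpi {q : ℂ} (hq : ‖q‖ < 1) (m : ℕ) :
    qfac q m * qpi q (q * q ^ m) = qpi q q := by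
  induction m with
  | zero => simp [qfac]
  | succ m ih =>
    rw [← ih, qpi_eq_mul hq (q * q ^ m), qfac_succ]
    ring_nf

lemma qpi_neg_pow_eq_zero {q : ℂ} (hq0 : q ≠ 0) (hq : ‖q‖ < 1) (m : ℕ) :
    qpi q (q ^ (-(m : ℤ))) = 0 := by
  induction m with
  | zero => simp [qpi_eq_mul hq 1]
  | succ m ih =>
    rw [qpi_eq_mul hq, ← zpow_add_one₀ hq0,
      show -((m + 1 : ℕ) : ℤ) + 1 = -(m : ℤ) by push_cast; ring, ih, mul_zero]

lemma choose_add (k m : ℤ) :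
    (k + m) * (k + m - 1) / 2 = k * (k - 1) / 2 + m * (m - 1) / 2 + k * m := by
  obtain ⟨a, ha⟩ := Int.even_mul_pred_self k
  obtain ⟨b, hb⟩ := Int.even_mul_pred_self m
  have h : (k + m) * (k + m - 1) = k * (k - 1) + m * (m - 1) + 2 * (k * m) := by ring
  rw [h, ha, hb]
  omega

lemma thetaTerm_add {q z : ℂ} (hq0 : q ≠ 0) (hz : z ≠ 0) (k m : ℤ) :
    thetaTerm q z (k + m) = thetaTerm q z k * thetaTerm q (z * q ^ k) m := by
  unfold thetaTerm
  rw [choose_add, zpow_add₀ (by norm_num), zpow_add₀ hq0, zpow_add₀ hq0, zpow_add₀ hz,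
    mul_zpow, zpow_mul]
  ring

lemma thetaTerm_mul (q x y : ℂ) (k : ℤ) :
    thetaTerm q (x * y) k = thetaTerm q x k * y ^ k := by
  unfold thetaTerm
  rw [mul_zpow]
  ring

lemma thetaTerm_succ {q : ℂ} (hq0 : q ≠ 0) (z : ℂ) (m : ℕ) :
    thetaTerm q z ((m + 1 : ℕ) : ℤ) = -(q ^ m * z) * thetaTerm q z (m : ℤ) := by
  unfold thetaTerm
  rw [Nat.cast_succ, choose_add (m : ℤ) 1, zpow_add₀ hq0, zpow_add₀ hq0]
  simp only [← Nat.cast_succ, zpow_natCast, pow_succ]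
  simp
  ring

lemma thetaTerm_neg {q : ℂ} (hq0 : q ≠ 0) (z : ℂ) (k : ℤ) :
    thetaTerm q z (-k) = thetaTerm q (q / z) k := by
  have h : -k * (-k - 1) / 2 = k * (k - 1) / 2 + k := by
    obtain ⟨a, ha⟩ := Int.even_mul_pred_self k
    have h : -k * (-k - 1) = k * (k - 1) + 2 * k := by ring
    rw [h, ha]
    omega
  unfold thetaTerm
  rw [h, zpow_add₀ hq0, div_zpow, zpow_neg, zpow_neg, ← inv_zpow, div_eq_mul_inv]
  norm_num
  ring

/-! ### Summability -/

lemma summable_of_ratio {f ρ : ℕ → ℂ} {l : ℂ} (hl : ‖l‖ < 1)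
    (hf : ∀ n, f (n + 1) = ρ n * f n) (hρ : Tendsto ρ atTop (𝓝 l)) : Summable f := by
  obtain ⟨r, hr, hr1⟩ := exists_between hl
  refine summable_of_ratio_norm_eventually_le hr1 ?_
  filter_upwards [hρ.norm.eventually (gt_mem_nhds hr)] with n hn
  rw [hf, norm_mul]
  exact mul_le_mul_of_nonneg_right hn.le (norm_nonneg _)

lemma summable_thetaTerm_nat {q : ℂ} (hq0 : q ≠ 0) (hq : ‖q‖ < 1) (z : ℂ) :
    Summable fun m : ℕ => thetaTerm q z (m : ℤ) := by
  refine summable_of_ratio (l := -(0 * z)) (by simp) (thetaTerm_succ hq0 z) ?_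
  exact ((tendsto_pow_atTop_nhds_zero_of_norm_lt_one hq).mul_const z).neg

lemma summable_thetaTerm {q : ℂ} (hq0 : q ≠ 0) (hq : ‖q‖ < 1) (z : ℂ) :
    Summable (thetaTerm q z) := by
  refine Summable.of_nat_of_neg (summable_thetaTerm_nat hq0 hq z) ?_
  simp only [thetaTerm_neg hq0]
  exact summable_thetaTerm_nat hq0 hq _

lemma tendsto_inv_one_sub {q : ℂ} (hq : ‖q‖ < 1) :
    Tendsto (fun m : ℕ => (1 - q ^ (m + 1))⁻¹) atTop (𝓝 1) := by
  have h := ((tendsto_pow_atTop_nhds_zero_of_norm_lt_one hq).comp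
    (tendsto_add_atTop_nat 1)).const_sub 1
  simpa using h.inv₀ (by simp)

lemma summable_euler_inv {q : ℂ} (hq : ‖q‖ < 1) {x : ℂ} (hx : ‖x‖ < 1) :
    Summable fun m : ℕ => (qfac q m)⁻¹ * x ^ m := by
  refine summable_of_ratio (l := 1 * x) (by simpa using hx) (fun n => ?_)
    ((tendsto_inv_one_sub hq).mul_const x)
  rw [qfac_succ, mul_inv, pow_succ]
  ring

lemma summable_euler {q : ℂ} (hq0 : q ≠ 0) (hq : ‖q‖ < 1) (x : ℂ) :
    Summable fun m : ℕ => thetaTerm q 1 m * (qfac q m)⁻¹ * x ^ m := by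
  refine summable_of_ratio (l := 1 * x * -(0 * 1)) (by simp) (fun n => ?_)
    (((tendsto_inv_one_sub hq).mul_const x).mul
      ((tendsto_pow_atTop_nhds_zero_of_norm_lt_one hq).mul_const 1).neg)
  rw [qfac_succ, mul_inv, pow_succ, thetaTerm_succ hq0]
  ring

/-! ### Euler's two expansions -/

/-- A convergent power series tends to its constant term along `x q^N → 0`. -/
lemma tendsto_tsum_mul_pow {q : ℂ} (hq : ‖q‖ < 1) {a : ℕ → ℂ} {x : ℂ}
    (h : Summable fun m => a m * x ^ m) :
    Tendsto (fun N : ℕ => ∑' m, a m * (x * q ^ N) ^ m) atTop (𝓝 (a 0)) := by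
  have key : Tendsto (fun N : ℕ => ∑' m, a m * (x * q ^ N) ^ m) atTop
      (𝓝 (∑' m, if m = 0 then a 0 else 0)) := by
    refine tendsto_tsum_of_dominated_convergence h.norm (fun m => ?_) (.of_forall fun N m => ?_)
    · rcases eq_or_ne m 0 with rfl | hm
      · simp
      · have h1 := ((tendsto_pow_atTop_nhds_zero_of_norm_lt_one hq).const_mul x).pow m
        simpa [hm] using h1.const_mul (a m)
    · rw [mul_pow, ← mul_assoc, norm_mul]
      refine mul_le_of_le_one_right (norm_nonneg _) ?_
      rw [norm_pow, norm_pow]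
      exact pow_le_one₀ (by positivity) (pow_le_one₀ (norm_nonneg _) hq.le)
  simpa using key

/-- The relation `f(xq) = (1 - x) f(x)` for `f(x) = ∑ x^m / (q;q)_m`. -/
lemma euler_inv_step {q : ℂ} (hq : ‖q‖ < 1) {x : ℂ} (hx : ‖x‖ < 1) :
    ∑' m : ℕ, (qfac q m)⁻¹ * (x * q) ^ m = (1 - x) * ∑' m : ℕ, (qfac q m)⁻¹ * x ^ m := by
  have hxq : ‖x * q‖ < 1 := by
    rw [norm_mul]; exact mul_lt_one_of_nonneg_of_lt_one_left (norm_nonneg _) hx hq.le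
  have h1 := summable_euler_inv hq hx
  have h2 := summable_euler_inv hq hxq
  have h3 : ∑' m : ℕ, ((qfac q m)⁻¹ * x ^ m - (qfac q m)⁻¹ * (x * q) ^ m)
      = x * ∑' m : ℕ, (qfac q m)⁻¹ * x ^ m := by
    rw [(h1.sub h2).tsum_eq_zero_add, ← tsum_mul_left]
    simp only [pow_zero, sub_self, zero_add]
    refine tsum_congr fun m => ?_
    have := qfac_ne_zero hq m
    have := one_sub_pow_ne_zero hq m
    rw [qfac_succ, mul_pow]
    field_simp
    ring
  rw [h1.tsum_sub h2] at h3
  linear_combination -h3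

lemma euler_inv {q : ℂ} (hq : ‖q‖ < 1) {x : ℂ} (hx : ‖x‖ < 1) :
    (∑' m : ℕ, (qfac q m)⁻¹ * x ^ m) * qpi q x = 1 := by
  have h : ∀ N : ℕ, (∑' m : ℕ, (qfac q m)⁻¹ * x ^ m) * ∏ i ∈ Finset.range N, (1 - x * q ^ i)
      = ∑' m : ℕ, (qfac q m)⁻¹ * (x * q ^ N) ^ m := by
    intro N
    induction N with
    | zero => simp
    | succ N ih =>
      have hN : ‖x * q ^ N‖ < 1 := by
        rw [norm_mul, norm_pow]
        exact mul_lt_one_of_nonneg_of_lt_one_left (norm_nonneg _) hx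
          (pow_le_one₀ (norm_nonneg _) hq.le)
      rw [Finset.prod_range_succ, ← mul_assoc, ih, pow_succ, ← mul_assoc x, euler_inv_step hq hN,
        mul_comm]
  have h1 := (tendsto_qpi hq x).const_mul (∑' m : ℕ, (qfac q m)⁻¹ * x ^ m)
  simp only [h] at h1
  have h2 := tendsto_tsum_mul_pow hq (summable_euler_inv hq hx)
  simpa [qfac] using tendsto_nhds_unique h1 h2

/-- The relation `g(x) = (1 - x) g(xq)` for `g(x) = ∑ (-1)^m q^{m(m-1)/2} x^m / (q;q)_m`. -/
lemma euler_step {q : ℂ} (hq0 : q ≠ 0) (hq : ‖q‖ < 1) (x : ℂ) :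
    ∑' m : ℕ, thetaTerm q 1 m * (qfac q m)⁻¹ * x ^ m =
      (1 - x) * ∑' m : ℕ, thetaTerm q 1 m * (qfac q m)⁻¹ * (x * q) ^ m := by
  have h1 := summable_euler hq0 hq x
  have h2 := summable_euler hq0 hq (x * q)
  have h3 : ∑' m : ℕ, (thetaTerm q 1 m * (qfac q m)⁻¹ * x ^ m
        - thetaTerm q 1 m * (qfac q m)⁻¹ * (x * q) ^ m)
      = -x * ∑' m : ℕ, thetaTerm q 1 m * (qfac q m)⁻¹ * (x * q) ^ m := by
    rw [(h1.sub h2).tsum_eq_zero_add, ← tsum_mul_left]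
    simp only [pow_zero, sub_self, zero_add]
    refine tsum_congr fun m => ?_
    have := qfac_ne_zero hq m
    have := one_sub_pow_ne_zero hq m
    rw [qfac_succ, thetaTerm_succ hq0, mul_pow, mul_pow]
    field_simp
    ring
  rw [h1.tsum_sub h2] at h3
  linear_combination h3

lemma euler {q : ℂ} (hq0 : q ≠ 0) (hq : ‖q‖ < 1) (x : ℂ) :
    ∑' m : ℕ, thetaTerm q 1 m * (qfac q m)⁻¹ * x ^ m = qpi q x := by
  have h : ∀ N : ℕ, ∑' m : ℕ, thetaTerm q 1 m * (qfac q m)⁻¹ * x ^ m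
      = (∏ i ∈ Finset.range N, (1 - x * q ^ i)) *
        ∑' m : ℕ, thetaTerm q 1 m * (qfac q m)⁻¹ * (x * q ^ N) ^ m := by
    intro N
    induction N with
    | zero => simp
    | succ N ih =>
      rw [ih, euler_step hq0 hq (x * q ^ N), Finset.prod_range_succ, pow_succ]
      ring_nf
  have h1 := (tendsto_qpi hq x).mul (tendsto_tsum_mul_pow hq (summable_euler hq0 hq x))
  simp only [← h] at h1
  simpa [qfac, thetaTerm] using tendsto_nhds_unique tendsto_const_nhds h1

lemma hasSum_euler {q : ℂ} (hq0 : q ≠ 0) (hq : ‖q‖ < 1) (x : ℂ) :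
    HasSum (fun m : ℕ => thetaTerm q x m * (qfac q m)⁻¹) (qpi q x) := by
  rw [← euler hq0 hq x]
  refine (summable_euler hq0 hq x).hasSum.congr_fun fun m => ?_
  rw [← one_mul x, thetaTerm_mul, one_mul, zpow_natCast]
  ring

/-! ### The bilateral sum -/

/-- The bilateral series as a theta series divided by `(c/z;q)_∞`, by interchanging sums. -/
lemma hasSum_theta_mul_qpi {q c z : ℂ} (hq0 : q ≠ 0) (hq : ‖q‖ < 1) (hz : z ≠ 0)
    (hcz : ‖c‖ < ‖z‖) :
    HasSum (fun k : ℤ => thetaTerm q z k * qpi q (c * q ^ k))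
      ((∑' k, thetaTerm q z k) / qpi q (c / z)) := by
  have hx : ‖c / z‖ < 1 := by
    rw [norm_div]
    exact (div_lt_one (norm_pos_iff.mpr hz)).mpr hcz
  have hT := summable_thetaTerm hq0 hq z
  have hE := summable_euler_inv hq hx
  have hprod : HasSum (fun p : ℤ × ℕ => thetaTerm q z p.1 * ((qfac q p.2)⁻¹ * (c / z) ^ p.2))
      ((∑' k, thetaTerm q z k) / qpi q (c / z)) := by
    rw [div_eq_mul_inv _ (qpi q (c / z)), ← eq_inv_of_mul_eq_one_left (euler_inv hq hx),
      tsum_mul_tsum_of_summable_norm hT.norm hE.norm]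
    exact (summable_mul_of_summable_norm hT.norm hE.norm).hasSum
  -- The shear `(k, m) ↦ (k + m, m)` undoes the factorisation of the double sum.
  let e : ℤ × ℕ ≃ ℤ × ℕ :=
    { toFun := fun p => (p.1 + p.2, p.2)
      invFun := fun p => (p.1 - p.2, p.2)
      left_inv := fun p => by simp
      right_inv := fun p => by simp }
  refine ((e.hasSum_iff).mpr hprod).prod_fiberwise fun k => ?_
  refine ((hasSum_euler hq0 hq (c * q ^ k)).mul_left (thetaTerm q z k)).congr_fun fun m => ?_
  have hc : c * q ^ k = z * q ^ k * (c / z) := by field_simp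
  simp only [e, Function.comp, Equiv.coe_fn_mk]
  rw [thetaTerm_add hq0 hz, hc, thetaTerm_mul _ _ (c / z), zpow_natCast]
  ring

lemma qpi_ne_zero_s11 {q : ℂ} (hq : ‖q‖ < 1) {x : ℂ} (hx : ‖x‖ < 1) : qpi q x ≠ 0 :=
  right_ne_zero_of_mul_eq_one (euler_inv hq hx)

/-- The Jacobi triple product in the range `|q| < |z|`: at `c = q` the bilateral series becomes
one-sided and is summed by Euler's expansion. -/
lemma tsum_theta_of_lt {q z : ℂ} (hq0 : q ≠ 0) (hq : ‖q‖ < 1) (hz : z ≠ 0) (hqz : ‖q‖ < ‖z‖) :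
    ∑' k, thetaTerm q z k = qpi q q * qpi q z * qpi q (q / z) := by
  have h := hasSum_theta_mul_qpi hq0 hq hz hqz
  have h1 : HasSum (fun k : ℤ => thetaTerm q z k * qpi q (q * q ^ k)) (qpi q q * qpi q z) := by
    refine (Function.Injective.hasSum_iff Nat.cast_injective fun k hk => ?_).mp
      (((hasSum_euler hq0 hq z).mul_left (qpi q q)).congr_fun fun m => ?_)
    · obtain ⟨m, rfl⟩ : ∃ m : ℕ, k = -(m : ℤ) - 1 := by
        refine ⟨(-k - 1).toNat, ?_⟩
        have : k < 0 := by
          by_contra hk'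
          exact hk ⟨k.toNat, Int.toNat_of_nonneg (not_lt.mp hk')⟩
        omega
      rw [← zpow_one_add₀ hq0, show 1 + (-(m : ℤ) - 1) = -(m : ℤ) by ring,
        qpi_neg_pow_eq_zero hq0 hq, mul_zero]
    · have := qfac_ne_zero hq m
      rw [← qfac_mul_qpi hq m]
      simp only [Function.comp, zpow_natCast]
      field_simp
  have hne : qpi q (q / z) ≠ 0 := by
    refine qpi_ne_zero_s11 hq ?_
    rw [norm_div]
    exact (div_lt_one (norm_pos_iff.mpr hz)).mpr hqz
  rw [← h.unique h1, div_mul_cancel₀ _ hne]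

/-- The Jacobi triple product. -/
lemma tsum_theta {q z : ℂ} (hq0 : q ≠ 0) (hq : ‖q‖ < 1) (hz : z ≠ 0) :
    ∑' k, thetaTerm q z k = qpi q q * qpi q z * qpi q (q / z) := by
  rcases lt_or_ge ‖q‖ ‖z‖ with h | h
  · exact tsum_theta_of_lt hq0 hq hz h
  · have hqz : ‖q‖ < ‖q / z‖ := by
      rw [norm_div, lt_div_iff₀ (norm_pos_iff.mpr hz)]
      exact mul_lt_of_lt_one_right (norm_pos_iff.mpr hq0) (h.trans_lt hq)
    have h1 := tsum_theta_of_lt hq0 hq (div_ne_zero hq0 hz) hqz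
    rw [div_div_cancel₀ hq0] at h1
    rw [← (Equiv.neg ℤ).tsum_eq]
    simp only [Equiv.neg_apply, thetaTerm_neg hq0]
    rw [h1]
    ring

/-- For `0<q<1`, `z ≠ 0`, `|z| > |c|` and `c ∉ {q^{-n} : n ≥ 0}`, both one-sided
series converge and
`Σ_{k=-∞}^∞ (-1)^k q^{k(k-1)/2} z^k/(c;q)_k = (q,z,q/z;q)_∞ / (c,c/z;q)_∞`. -/
theorem stmt11 (q : ℝ) (hq0 : 0 < q) (hq1 : q < 1) (c z : ℂ)
    (hz0 : z ≠ 0) (hzc : ‖c‖ < ‖z‖)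
    (hc : ∀ n : ℕ, c * (q : ℂ) ^ n ≠ 1) :
    Summable (fun k : ℕ => psi01Term (q : ℂ) c z (k : ℤ)) ∧
    Summable (fun k : ℕ => psi01Term (q : ℂ) c z (-(k : ℤ) - 1)) ∧
    (∑' k : ℕ, psi01Term (q : ℂ) c z (k : ℤ)) +
        (∑' k : ℕ, psi01Term (q : ℂ) c z (-(k : ℤ) - 1)) =
      qpi (q : ℂ) (q : ℂ) * qpi (q : ℂ) z * qpi (q : ℂ) ((q : ℂ) / z) /
        (qpi (q : ℂ) c * qpi (q : ℂ) (c / z)) := by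
  have hq0' : (q : ℂ) ≠ 0 := by exact_mod_cast hq0.ne'
  have hq : ‖(q : ℂ)‖ < 1 := by
    rw [Complex.norm_real, Real.norm_eq_abs, abs_of_pos hq0]
    exact hq1
  have h := (hasSum_theta_mul_qpi hq0' hq hz0 hzc).div_const (qpi q c)
  have hterm : (fun k : ℤ => thetaTerm q z k * qpi q (c * (q : ℂ) ^ k) / qpi q c)
      = psi01Term q c z := by
    -- Where `(cq^k;q)_∞ = 0`, the junk value `qpz = x / 0 = 0` still inverts to the correct `0`.
    funext k
    simp only [psi01Term, qpz, thetaTerm, div_div_eq_mul_div]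
  rw [hterm, tsum_theta hq0' hq hz0, div_div, mul_comm (qpi _ (c / z))] at h
  have hpos : Summable fun k : ℕ => psi01Term (q : ℂ) c z (k : ℤ) :=
    h.summable.comp_injective Nat.cast_injective
  have hneg : Summable fun k : ℕ => psi01Term (q : ℂ) c z (-(k : ℤ) - 1) :=
    h.summable.comp_injective (i := fun k : ℕ => -(k : ℤ) - 1) fun a b hab => by
      simpa using hab
  refine ⟨hpos, hneg, ?_⟩
  have hneg' : Summable fun k : ℕ => psi01Term (q : ℂ) c z (-((k : ℤ) + 1)) := by
    simpa only [neg_add'] using hneg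
  rw [← h.tsum_eq, tsum_of_nat_of_neg_add_one hpos hneg']
  simp only [neg_add']
end
end
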